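/- Let C*, L* ∈ ℝ with 1/σ² < C* ≤ L*, and define for t ∈ [0,T]: C_t := 1/( m_t²/C* + σ²(1 − m_t²) ) − 1/σ² and L_t := min{ 1/(σ²(1 − m_t²)) ; L*/m_t² } − 1/σ² (the first term interpreted as +∞ when m_t = 1); write L̄_t := L_{T−t} and C̄_t := C_{T−t}. Let N ≥ 1, h := T/N, t_k := kh. (i) If h ≤ min{ 2σ² log 2 / β(T) ; (σ²C* − 1)/( σ²C* (σ²L* + 1) L* β(T) ) ; (σ²C* − 1)/( (σ²L* − 1) L* β(T) ) }, then for every 0 ≤ k ≤ N−1: 0 < 1 + ( m̃_{t_k}²/m̃_{t_{k+1}}² ) ( ∫_{t_k}^{t_{k+1}} L̄_t (m̃_t/m̃_{t_k}) β̄(t) dt )² − 2 ( m̃_{t_k}/m̃_{t_{k+1}} ) ∫_{t_k}^{t_{k+1}} C̄_t (m̃_t/m̃_{t_k}) β̄(t) dt < 1. (ii) If moreover M ≥ 0 and h ≤ min{ 2σ² log 2 / β(T) ; (σ²C* − 1)/( σ²M + β(T) L* (σ²L* − 1) ) ; ((σ²C* − 1)/(σ²C*)) · m_T²(1 − m_T²)/(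 σ²M(1 − m_T²) + β(T) L* m_T² ) ; (σ²C* − 1) L* / ( σ²C* (σ²L* + 1) (M + β(T) L*²) ) }, then for every 0 ≤ k ≤ N−1: 0 < 1 + ½ ( m̃_{t_k}²/m̃_{t_{k+1}}² ) ( ∫_{t_k}^{t_{k+1}} L̄_t (m̃_t/m̃_{t_k}) β̄(t) dt )² − ( m̃_{t_k}/m̃_{t_{k+1}} ) ∫_{t_k}^{t_{k+1}} C̄_t (m̃_t/m̃_{t_k}) β̄(t) dt + ( m̃_{t_k}²/m̃_{t_{k+1}}² ) M h ∫_{t_k}^{t_{k+1}} (m̃_t/m̃_{t_k}) β̄(t) dt < 1. -/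

import Mathlib

open MeasureTheory Real Set
open scoped ENNReal Classical

noncomputable section

/-- `m_t = exp(−(1/(2σ²)) ∫₀^t β(s) ds)` (here `σ2 = σ²`). -/
def mcoef (σ2 : ℝ) (β : ℝ → ℝ) (t : ℝ) : ℝ :=
  Real.exp (-(1 / (2 * σ2)) * ∫ s in (0:ℝ)..t, β s)

/-- `m̃_t = exp(−(1/(2σ²)) ∫₀^t β̄(s) ds)` with `β̄(s) = β(T − s)` (here `σ2 = σ²`). -/
def mtilde (σ2 T : ℝ) (β : ℝ → ℝ) (t : ℝ) : ℝ :=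
  Real.exp (-(1 / (2 * σ2)) * ∫ s in (0:ℝ)..t, β (T - s))

/-- `C_t = 1/(m_t²/C* + σ²(1 − m_t²)) − 1/σ²` (here `σ2 = σ²`). -/
def concConst (σ2 : ℝ) (β : ℝ → ℝ) (Cstar t : ℝ) : ℝ :=
  1 / (mcoef σ2 β t ^ 2 / Cstar + σ2 * (1 - mcoef σ2 β t ^ 2)) - 1 / σ2

/-- `L_t = min{1/(σ²(1−m_t²)); L*/m_t²} − 1/σ²`, the first term of the minimum being
interpreted as `+∞` when `m_t = 1` (here `σ2 = σ²`). -/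
def lipConst (σ2 : ℝ) (β : ℝ → ℝ) (Lstar t : ℝ) : ℝ :=
  (if mcoef σ2 β t = 1 then Lstar / mcoef σ2 β t ^ 2
    else min (1 / (σ2 * (1 - mcoef σ2 β t ^ 2))) (Lstar / mcoef σ2 β t ^ 2)) - 1 / σ2

/-- The quantity
`1 + (m̃_a²/m̃_b²)(∫_a^b L̄_t (m̃_t/m̃_a) β̄(t) dt)² − 2(m̃_a/m̃_b) ∫_a^b C̄_t (m̃_t/m̃_a) β̄(t) dt`
on the discretization cell `[a, b]`. -/
def stepE1 (σ2 T : ℝ) (β L C : ℝ → ℝ) (a b : ℝ) : ℝ :=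
  1 + mtilde σ2 T β a ^ 2 / mtilde σ2 T β b ^ 2 *
      (∫ t in a..b, L (T - t) * (mtilde σ2 T β t / mtilde σ2 T β a) * β (T - t)) ^ 2 -
    2 * (mtilde σ2 T β a / mtilde σ2 T β b) *
      ∫ t in a..b, C (T - t) * (mtilde σ2 T β t / mtilde σ2 T β a) * β (T - t)

/-- The quantity
`1 + ½(m̃_a²/m̃_b²)(∫_a^b L̄_t (m̃_t/m̃_a) β̄(t) dt)² − (m̃_a/m̃_b) ∫_a^b C̄_t (m̃_t/m̃_a) β̄(t) dt
  + (m̃_a²/m̃_b²) M h ∫_a^b (m̃_t/m̃_a) β̄(t) dt` on the discretization cell `[a, b]`. -/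
def stepE2 (σ2 T : ℝ) (β L C : ℝ → ℝ) (M h a b : ℝ) : ℝ :=
  1 + 1 / 2 * (mtilde σ2 T β a ^ 2 / mtilde σ2 T β b ^ 2) *
      (∫ t in a..b, L (T - t) * (mtilde σ2 T β t / mtilde σ2 T β a) * β (T - t)) ^ 2 -
    mtilde σ2 T β a / mtilde σ2 T β b *
      (∫ t in a..b, C (T - t) * (mtilde σ2 T β t / mtilde σ2 T β a) * β (T - t)) +
    mtilde σ2 T β a ^ 2 / mtilde σ2 T β b ^ 2 * M * h *
      ∫ t in a..b, (mtilde σ2 T β t / mtilde σ2 T β a) * β (T - t)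

/-!
Write `ψ_t = (m̃_t / m̃_b) β̄(t)` for the weight on a cell `[a, b]` of length `h`, `B` for a bound
of the schedule, `l = σ²L*`, `q = 1 - 1/(σ²C*)`, and `x = m_{T-t}²`. By Cauchy-Schwarz,
`(∫ L̄ψ)² ≤ (∫ ψ) ∫ L̄²ψ`, so both upper bounds follow from the pointwise inequality
`½ (∫ ψ) L̄² + (m̃_a / m̃_b) M h < C̄`. Here `∫ ψ ≤ (4/3) h B`, while `q x < σ²C̄`, and `Λ = σ²L̄`
satisfies both `Λ ≤ l` and `Λ (1 - x) ≤ x`. This leaves the inequality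
`σ²M h / x + h B L* (1 + Λ) ≤ q`. Without the `M`-term it follows from `Λ ≤ l`. Otherwise its
left side is at most the convex function `ξ ↦ σ²M h / ξ + h B L* / (1 - ξ)` at
`min x (l / (l + 1))`, and the last two step-size bounds control that function at `m_T²` and at
`l / (l + 1)`. The lower bounds only need `∫ C̄ψ < 1/2`.
-/

section WeightedIntegrals

variable {a b : ℝ} {f ψ : ℝ → ℝ}

lemma sq_integral_mul_le (hab : a ≤ b) (hψ : IntervalIntegrable ψ volume a b)
    (hψ0 : ∀ t ∈ Icc a b, 0 ≤ ψ t) (hf : ContinuousOn f (Icc a b)) :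
    (∫ t in a..b, f t * ψ t) ^ 2 ≤ (∫ t in a..b, ψ t) * ∫ t in a..b, f t ^ 2 * ψ t := by
  rw [← uIcc_of_le hab] at hf
  have hfψ : IntervalIntegrable (fun t => f t * ψ t) volume a b := hψ.continuousOn_mul hf
  have hf2ψ : IntervalIntegrable (fun t => f t ^ 2 * ψ t) volume a b :=
    hψ.continuousOn_mul (hf.pow 2)
  have quadratic_nonneg (x : ℝ) : 0 ≤ (∫ t in a..b, ψ t) * (x * x) +
      2 * (∫ t in a..b, f t * ψ t) * x + ∫ t in a..b, f t ^ 2 * ψ t := by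
    have expand : ∫ t in a..b, (x + f t) ^ 2 * ψ t = (∫ t in a..b, ψ t) * (x * x) +
        2 * (∫ t in a..b, f t * ψ t) * x + ∫ t in a..b, f t ^ 2 * ψ t := by
      rw [mul_right_comm, ← intervalIntegral.integral_mul_const,
        ← intervalIntegral.integral_const_mul,
        ← intervalIntegral.integral_add (hψ.mul_const _) (hfψ.const_mul _),
        ← intervalIntegral.integral_add ((hψ.mul_const _).add (hfψ.const_mul _)) hf2ψ]
      exact intervalIntegral.integral_congr fun t _ => by ring
    rw [← expand]
    exact intervalIntegral.integral_nonneg hab fun t ht => mul_nonneg (sq_nonneg _) (hψ0 t ht)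
  have := discrim_le_zero quadratic_nonneg
  rw [discrim] at this
  linarith

lemma half_sq_integral_add_lt {g : ℝ → ℝ} {E : ℝ} (hab : a < b)
    (hψ : IntervalIntegrable ψ volume a b) (hψ0 : ∀ t ∈ Icc a b, 0 < ψ t)
    (hf : ContinuousOn f (Icc a b)) (hg : ContinuousOn g (Icc a b))
    (hfg : ∀ t ∈ Icc a b, 1 / 2 * (∫ t in a..b, ψ t) * f t ^ 2 + E < g t) :
    1 / 2 * (∫ t in a..b, f t * ψ t) ^ 2 + E * ∫ t in a..b, ψ t < ∫ t in a..b, g t * ψ t := by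
  have cauchy_schwarz := sq_integral_mul_le hab.le hψ (fun t ht => (hψ0 t ht).le) hf
  rw [← uIcc_of_le hab.le] at hf hg
  set I := ∫ t in a..b, ψ t
  have hf2ψ : IntervalIntegrable (fun t => f t ^ 2 * ψ t) volume a b :=
    hψ.continuousOn_mul (hf.pow 2)
  have hgψ : IntervalIntegrable (fun t => g t * ψ t) volume a b := hψ.continuousOn_mul hg
  have lower : IntervalIntegrable (fun t => 1 / 2 * I * (f t ^ 2 * ψ t) + E * ψ t) volume a b :=
    (hf2ψ.const_mul _).add (hψ.const_mul _)
  have gap_pos : 0 < ∫ t in a..b, (g t * ψ t - (1 / 2 * I * (f t ^ 2 * ψ t) + E * ψ t)) := by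
    refine intervalIntegral.intervalIntegral_pos_of_pos_on (hgψ.sub lower) (fun t ht => ?_) hab
    have ht := Ioo_subset_Icc_self ht
    linarith [mul_lt_mul_of_pos_right (hfg t ht) (hψ0 t ht)]
  rw [intervalIntegral.integral_sub hgψ lower,
    intervalIntegral.integral_add (hf2ψ.const_mul _) (hψ.const_mul _),
    intervalIntegral.integral_const_mul, intervalIntegral.integral_const_mul] at gap_pos
  linarith

end WeightedIntegrals

section PointwiseInequalities

lemma convexOn_div_add_div_one_sub {K D : ℝ} (hK : 0 ≤ K) (hD : 0 ≤ D) :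
    ConvexOn ℝ (Ioo 0 1) fun x : ℝ => K / x + D / (1 - x) := by
  have inv : ConvexOn ℝ (Ioi 0) fun x : ℝ => x⁻¹ := by simpa using convexOn_zpow (𝕜 := ℝ) (-1)
  have inv_one_sub : ConvexOn ℝ (Ioo 0 1) fun x : ℝ => (1 - x)⁻¹ :=
    (inv.comp_affineMap (AffineMap.lineMap (1 : ℝ) 0)).subset
      (fun x hx => by simpa [AffineMap.lineMap_apply] using hx.2) (convex_Ioo 0 1)
      |>.congr fun x _ => congrArg (·⁻¹) (by simp [AffineMap.lineMap_apply, sub_eq_neg_add])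
  simpa only [div_eq_mul_inv, smul_eq_mul] using!
    ((inv.subset Ioo_subset_Ioi_self (convex_Ioo 0 1)).smul hK).add (inv_one_sub.smul hD)

lemma div_add_mul_one_add_le {K D l q μ x Λ : ℝ} (hK : 0 ≤ K) (hD : 0 ≤ D) (hl : 0 < l)
    (hμ0 : 0 < μ) (hμ1 : μ < 1) (hμx : μ ≤ x) (hΛl : Λ ≤ l) (hΛx : Λ * (1 - x) ≤ x)
    (hμ : K / μ + D / (1 - μ) ≤ q) (hlq : K * (l + 1) / l + D * (l + 1) ≤ q) :
    K / x + D * (1 + Λ) ≤ q := by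
  set p := l / (l + 1) with hp
  have hp0 : 0 < p := by positivity
  have hp1 : 1 - p = 1 / (l + 1) := by rw [hp]; field_simp; ring
  have hp_lt : p < 1 := by rw [← sub_pos, hp1]; positivity
  have at_p : K / p + D / (1 - p) ≤ q := by
    rwa [hp1, hp, div_div_eq_mul_div, div_div_eq_mul_div, div_one]
  set y := min x p
  have hy0 : 0 < y := lt_min (hμ0.trans_le hμx) hp0
  have hy1 : 0 < 1 - y := sub_pos.2 ((min_le_right _ _).trans_lt hp_lt)
  have at_y : K / y + D / (1 - y) ≤ q := by
    have hy : y ∈ segment ℝ μ p := by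
      rw [segment_eq_uIcc]
      exact ⟨le_min (inf_le_left.trans hμx) inf_le_right, (min_le_right _ _).trans le_sup_right⟩
    exact ((convexOn_div_add_div_one_sub hK hD).le_max_of_mem_segment
      ⟨hμ0, hμ1⟩ ⟨hp0, hp_lt⟩ hy).trans (max_le hμ at_p)
  have hΛy : 1 + Λ ≤ 1 / (1 - y) := by
    rw [le_div_iff₀ hy1]
    rcases min_choice x p with h | h
    · rw [show y = x from h]; linarith
    · rw [show y = p from h, hp1, mul_one_div, div_le_one (by linarith)]; linarith
  calc K / x + D * (1 + Λ) ≤ K / y + D * (1 / (1 - y)) := by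
        gcongr
        exact min_le_left _ _
    _ ≤ q := by rwa [mul_one_div]

lemma two_thirds_mul_sq_add_le {l x Λ : ℝ} (hl : 1 ≤ l) (hΛ0 : 0 ≤ Λ) (hΛl : Λ ≤ l)
    (hΛx : Λ * (1 - x) ≤ x) : 2 / 3 * (Λ ^ 2 + x) ≤ l * x * (1 + Λ) := by
  have hx : 0 ≤ x := by nlinarith
  have hΛsq : Λ ^ 2 ≤ x * (Λ * (1 + Λ)) := by nlinarith
  have hl' : 2 / 3 * (Λ * (1 + Λ) + 1) ≤ l * (1 + Λ) := by nlinarith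
  calc 2 / 3 * (Λ ^ 2 + x) ≤ x * (2 / 3 * (Λ * (1 + Λ) + 1)) := by linarith
    _ ≤ x * (l * (1 + Λ)) := by gcongr
    _ = l * x * (1 + Λ) := by ring

/-- `A`, `K`, `r`, `x` stand for `h B / σ²`, `σ²M h`, `m̃_a / m̃_b`, `m_{T-t}²`, and `2 / 3` is half
of the bound `4 / 3` on `m̃_t / m̃_b`. -/
lemma two_thirds_mul_sq_add_mul_le {A K l q r x Λ : ℝ} (hA : 0 ≤ A) (hK : 0 ≤ K) (hl : 1 ≤ l)
    (hq : q ≤ 1) (hΛ0 : 0 ≤ Λ) (hΛl : Λ ≤ l) (hΛx : Λ * (1 - x) ≤ x) (hr : r ≤ 1 + 2 / 3 * A)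
    (h : K + A * l * x * (1 + Λ) ≤ q * x) : 2 / 3 * A * Λ ^ 2 + r * K ≤ q * x := by
  have hx : 0 ≤ x := by nlinarith
  have hKx : K ≤ x := by
    have : 0 ≤ A * l * x * (1 + Λ) := by positivity
    have : q * x ≤ x := mul_le_of_le_one_left hx hq
    linarith
  calc 2 / 3 * A * Λ ^ 2 + r * K ≤ 2 / 3 * A * Λ ^ 2 + (1 + 2 / 3 * A) * K := by gcongr
    _ = K + A * (2 / 3 * (Λ ^ 2 + K)) := by ring
    _ ≤ K + A * (2 / 3 * (Λ ^ 2 + x)) := by gcongr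
    _ ≤ K + A * (l * x * (1 + Λ)) := by
        gcongr K + A * ?_
        exact two_thirds_mul_sq_add_le hl hΛ0 hΛl hΛx
    _ = K + A * l * x * (1 + Λ) := by ring
    _ ≤ q * x := h

lemma four_thirds_mul_lt_half {A c l : ℝ} (hA : 0 ≤ A) (hc : 1 < c) (hcl : c ≤ l)
    (h : A * l * (l + 1) ≤ 1 - 1 / c) : 4 / 3 * A * (c - 1) < 1 / 2 := by
  have hAc : A * (c * (c + 1)) ≤ 1 - 1 / c := by
    have hl : 0 ≤ l := by linarith
    refine le_trans ?_ h
    rw [mul_assoc]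
    gcongr
  have hAc' : A * (c ^ 2 * (c + 1)) ≤ c - 1 := by
    have := mul_le_mul_of_nonneg_right hAc (by linarith : 0 ≤ c)
    rw [sub_mul, one_div_mul_cancel (by linarith)] at this
    linarith
  have hcubic : 0 < c ^ 2 * (c + 1) := by positivity
  refine lt_of_mul_lt_mul_right ?_ hcubic.le
  nlinarith [mul_le_mul_of_nonneg_left hAc' (by linarith : 0 ≤ c - 1)]

lemma exp_half_le {y : ℝ} (hy0 : 0 ≤ y) (hy : y ≤ 1 / 2) : exp (y / 2) ≤ 1 + 2 / 3 * y := by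
  refine (exp_bound_div_one_sub_of_interval (by linarith) (by linarith)).trans ?_
  rw [div_le_iff₀ (by linarith)]
  nlinarith

end PointwiseInequalities

section Constants

variable {σ2 Cstar Lstar t : ℝ} {β : ℝ → ℝ}

lemma mcoef_pos (σ2 : ℝ) (β : ℝ → ℝ) (t : ℝ) : 0 < mcoef σ2 β t := exp_pos _

lemma mcoef_sq_pos (σ2 : ℝ) (β : ℝ → ℝ) (t : ℝ) : 0 < mcoef σ2 β t ^ 2 :=
  pow_pos (mcoef_pos σ2 β t) 2

lemma lipConst_eq_one_div_max (hσ2 : 0 < σ2) (hL : 0 < Lstar) (hm : mcoef σ2 β t ≤ 1) :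
    lipConst σ2 β Lstar t =
      1 / max (σ2 * (1 - mcoef σ2 β t ^ 2)) (mcoef σ2 β t ^ 2 / Lstar) - 1 / σ2 := by
  have hm0 := mcoef_pos σ2 β t
  rw [lipConst]
  split_ifs with h
  · simp [h, hL.le]
  · have hm1 : 0 < 1 - mcoef σ2 β t ^ 2 :=
      sub_pos.2 (pow_lt_one₀ hm0.le (lt_of_le_of_ne hm h) two_ne_zero)
    have antitone : AntitoneOn (fun x : ℝ => 1 / x) (Ioi 0) := fun x hx y _ hxy =>
      one_div_le_one_div_of_le hx hxy
    rw [← one_div_div (mcoef σ2 β t ^ 2) Lstar, antitone.map_max (mem_Ioi.2 (by positivity))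
      (mem_Ioi.2 (by positivity))]

lemma max_mul_one_sub_pos (hL : 0 < Lstar) :
    0 < max (σ2 * (1 - mcoef σ2 β t ^ 2)) (mcoef σ2 β t ^ 2 / Lstar) :=
  lt_max_of_lt_right (div_pos (mcoef_sq_pos σ2 β t) hL)

lemma lipConst_nonneg (hσ2 : 0 < σ2) (hL : 1 ≤ σ2 * Lstar) (hm : mcoef σ2 β t ≤ 1) :
    0 ≤ lipConst σ2 β Lstar t := by
  have hL0 : 0 < Lstar := pos_of_mul_pos_right (one_pos.trans_le hL) hσ2.le
  have hx1 : mcoef σ2 β t ^ 2 ≤ 1 := pow_le_one₀ (mcoef_pos σ2 β t).le hm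
  rw [lipConst_eq_one_div_max hσ2 hL0 hm, sub_nonneg]
  refine one_div_le_one_div_of_le (max_mul_one_sub_pos hL0) (max_le ?_ ?_)
  · nlinarith
  · rw [div_le_iff₀ hL0]; linarith

lemma lipConst_le (hσ2 : 0 < σ2) (hL : 0 < Lstar) (hm : mcoef σ2 β t ≤ 1) :
    lipConst σ2 β Lstar t ≤ Lstar := by
  rw [lipConst_eq_one_div_max hσ2 hL hm, sub_le_iff_le_add, div_le_iff₀ (max_mul_one_sub_pos hL)]
  set x := mcoef σ2 β t ^ 2
  set d := max (σ2 * (1 - x)) (x / Lstar)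
  calc 1 = Lstar * (x / Lstar) + 1 / σ2 * (σ2 * (1 - x)) := by field_simp; ring
    _ ≤ Lstar * d + 1 / σ2 * d := by
        gcongr
        exacts [le_max_right _ _, le_max_left _ _]
    _ = (Lstar + 1 / σ2) * d := by ring

lemma mul_lipConst_mul_one_sub_le (hσ2 : 0 < σ2) (hL : 0 < Lstar) (hm : mcoef σ2 β t ≤ 1) :
    σ2 * lipConst σ2 β Lstar t * (1 - mcoef σ2 β t ^ 2) ≤ mcoef σ2 β t ^ 2 := by
  rw [lipConst_eq_one_div_max hσ2 hL hm]
  have hd := max_mul_one_sub_pos (σ2 := σ2) (β := β) (t := t) hL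
  set x := mcoef σ2 β t ^ 2
  set d := max (σ2 * (1 - x)) (x / Lstar)
  have h : σ2 * (1 - x) / d ≤ 1 := (div_le_one hd).2 (le_max_left _ _)
  calc σ2 * (1 / d - 1 / σ2) * (1 - x) = σ2 * (1 - x) / d - (1 - x) := by field_simp
    _ ≤ x := by linarith

lemma div_add_mul_one_sub_pos (hσ2 : 0 < σ2) (hC : 0 < Cstar) (hm : mcoef σ2 β t ≤ 1) :
    0 < mcoef σ2 β t ^ 2 / Cstar + σ2 * (1 - mcoef σ2 β t ^ 2) := by
  have hx0 := mcoef_sq_pos σ2 β t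
  have hx1 : 0 ≤ 1 - mcoef σ2 β t ^ 2 := sub_nonneg.2 (pow_le_one₀ (mcoef_pos σ2 β t).le hm)
  positivity

lemma lt_mul_concConst (hσ2 : 0 < σ2) (hC : 1 < σ2 * Cstar) (hm : mcoef σ2 β t ≤ 1) :
    (1 - 1 / (σ2 * Cstar)) * mcoef σ2 β t ^ 2 < σ2 * concConst σ2 β Cstar t := by
  have hC0 : 0 < Cstar := pos_of_mul_pos_right (one_pos.trans hC) hσ2.le
  have hd := div_add_mul_one_sub_pos hσ2 hC0 hm
  have hx0 := mcoef_sq_pos σ2 β t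
  rw [concConst]
  set x := mcoef σ2 β t ^ 2
  set z := (1 - 1 / (σ2 * Cstar)) * x with hz
  have denom_eq : x / Cstar + σ2 * (1 - x) = σ2 * (1 - z) := by rw [hz]; field_simp; ring
  rw [denom_eq] at hd ⊢
  have hz0 : 0 < z := mul_pos (sub_pos.2 ((div_lt_one (by linarith)).2 hC)) hx0
  have hz1 : 0 < 1 - z := pos_of_mul_pos_right hd hσ2.le
  calc z < 1 / (1 - z) - 1 := by
        rw [lt_sub_iff_add_lt, lt_div_iff₀ hz1]
        nlinarith
    _ = σ2 * (1 / (σ2 * (1 - z)) - 1 / σ2) := by field_simp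

lemma concConst_le (hσ2 : 0 < σ2) (hC : 1 < σ2 * Cstar) (hm : mcoef σ2 β t ≤ 1) :
    concConst σ2 β Cstar t ≤ Cstar - 1 / σ2 := by
  have hC0 : 0 < Cstar := pos_of_mul_pos_right (one_pos.trans hC) hσ2.le
  have hx1 : mcoef σ2 β t ^ 2 ≤ 1 := pow_le_one₀ (mcoef_pos σ2 β t).le hm
  rw [concConst]
  gcongr
  rw [div_le_iff₀ (div_add_mul_one_sub_pos hσ2 hC0 hm), mul_add, mul_div_cancel₀ _ hC0.ne']
  nlinarith

lemma div_le_half_of_mul_le {δ : ℝ} (hσ2 : 0 < σ2) (hδ : 0 ≤ δ) (hC : 1 < σ2 * Cstar)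
    (hCL : Cstar ≤ Lstar) (h : δ * Lstar * (σ2 * Lstar + 1) ≤ 1 - 1 / (σ2 * Cstar)) :
    δ / σ2 ≤ 1 / 2 := by
  have hl : 1 < σ2 * Lstar := hC.trans_le (by gcongr)
  have hq : 1 - 1 / (σ2 * Cstar) ≤ 1 := sub_le_self 1 (by positivity)
  have := calc δ / σ2 * (1 * (1 + 1)) ≤ δ / σ2 * (σ2 * Lstar * (σ2 * Lstar + 1)) := by gcongr
    _ = δ * Lstar * (σ2 * Lstar + 1) := by field_simp
    _ ≤ 1 := h.trans hq
  linarith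

lemma mul_sq_lipConst_add_lt_concConst {δ D r : ℝ} (hσ2 : 0 < σ2) (hC : 1 < σ2 * Cstar)
    (hCL : Cstar ≤ Lstar) (hm : mcoef σ2 β t ≤ 1) (hδ : 0 ≤ δ) (hD : 0 ≤ D)
    (hr : r ≤ 1 + 2 / 3 * (δ / σ2))
    (h : σ2 * D + δ * Lstar * mcoef σ2 β t ^ 2 * (1 + σ2 * lipConst σ2 β Lstar t) ≤
      (1 - 1 / (σ2 * Cstar)) * mcoef σ2 β t ^ 2) :
    2 / 3 * δ * lipConst σ2 β Lstar t ^ 2 + r * D < concConst σ2 β Cstar t := by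
  have hl : 1 ≤ σ2 * Lstar := hC.le.trans (by gcongr)
  have hL : 0 < Lstar := pos_of_mul_pos_right (one_pos.trans_le hl) hσ2.le
  have hΛ0 := lipConst_nonneg hσ2 hl hm
  have hδl : δ / σ2 * (σ2 * Lstar) = δ * Lstar := by field_simp
  have scaled := two_thirds_mul_sq_add_mul_le (A := δ / σ2) (K := σ2 * D) (l := σ2 * Lstar)
    (q := 1 - 1 / (σ2 * Cstar)) (x := mcoef σ2 β t ^ 2) (Λ := σ2 * lipConst σ2 β Lstar t)
    (by positivity) (by positivity) hl (sub_le_self 1 (by positivity)) (by positivity)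
    (mul_le_mul_of_nonneg_left (lipConst_le hσ2 hL hm) hσ2.le)
    (mul_lipConst_mul_one_sub_le hσ2 hL hm) hr (by rwa [hδl])
  refine lt_of_mul_lt_mul_left ?_ hσ2.le
  calc σ2 * (2 / 3 * δ * lipConst σ2 β Lstar t ^ 2 + r * D)
      = 2 / 3 * (δ / σ2) * (σ2 * lipConst σ2 β Lstar t) ^ 2 + r * (σ2 * D) := by field_simp
    _ ≤ (1 - 1 / (σ2 * Cstar)) * mcoef σ2 β t ^ 2 := scaled
    _ < σ2 * concConst σ2 β Cstar t := lt_mul_concConst hσ2 hC hm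

end Constants

/-- A noise schedule on `[0, T]` with upper bound `B`; for a monotone schedule `B = β T`. -/
structure IsNoiseSchedule (T B : ℝ) (β : ℝ → ℝ) : Prop where
  intervalIntegrable : IntervalIntegrable β volume 0 T
  pos : ∀ t ∈ Icc 0 T, 0 < β t
  le_bound : ∀ t ∈ Icc 0 T, β t ≤ B

namespace IsNoiseSchedule

variable {σ2 T B Cstar Lstar a b t : ℝ} {β : ℝ → ℝ}

lemma of_monotoneOn (hT : 0 ≤ T) (hpos : ∀ t ∈ Icc 0 T, 0 < β t)
    (hmono : MonotoneOn β (Icc 0 T)) : IsNoiseSchedule T (β T) β where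
  intervalIntegrable := (hmono.mono (uIcc_of_le hT).subset).intervalIntegrable
  pos := hpos
  le_bound _ ht := hmono ht ⟨ht.1.trans ht.2, le_rfl⟩ ht.2

lemma reverse (hβ : IsNoiseSchedule T B β) : IsNoiseSchedule T B fun t => β (T - t) where
  intervalIntegrable := by simpa using (hβ.intervalIntegrable.comp_sub_left T).symm
  pos t ht := hβ.pos _ ⟨sub_nonneg.2 ht.2, sub_le_self T ht.1⟩
  le_bound t ht := hβ.le_bound _ ⟨sub_nonneg.2 ht.2, sub_le_self T ht.1⟩

lemma bound_pos (hβ : IsNoiseSchedule T B β) (hT : 0 ≤ T) : 0 < B :=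
  (hβ.pos 0 ⟨le_rfl, hT⟩).trans_le (hβ.le_bound 0 ⟨le_rfl, hT⟩)

lemma intervalIntegrable_of_mem (hβ : IsNoiseSchedule T B β) (ha : a ∈ Icc 0 T)
    (hb : b ∈ Icc 0 T) : IntervalIntegrable β volume a b :=
  hβ.intervalIntegrable.mono_set <|
    (uIcc_subset_Icc ha hb).trans_eq (uIcc_of_le (ha.1.trans ha.2)).symm

lemma integral_pos (hβ : IsNoiseSchedule T B β) (ha : 0 ≤ a) (hab : a < b) (hb : b ≤ T) :
    0 < ∫ t in a..b, β t :=
  intervalIntegral.intervalIntegral_pos_of_pos_on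
    (hβ.intervalIntegrable_of_mem ⟨ha, hab.le.trans hb⟩ ⟨ha.trans hab.le, hb⟩)
    (fun t ht => hβ.pos t ⟨ha.trans ht.1.le, ht.2.le.trans hb⟩) hab

lemma integral_le (hβ : IsNoiseSchedule T B β) (ha : 0 ≤ a) (hab : a ≤ b) (hb : b ≤ T) :
    ∫ t in a..b, β t ≤ (b - a) * B := by
  have := intervalIntegral.integral_mono_on hab
    (hβ.intervalIntegrable_of_mem ⟨ha, hab.trans hb⟩ ⟨ha.trans hab, hb⟩)
    (intervalIntegrable_const (c := B))
    fun t ht => hβ.le_bound t ⟨ha.trans ht.1, ht.2.trans hb⟩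
  simpa using this

lemma mcoef_div_mcoef (hβ : IsNoiseSchedule T B β) (ha : a ∈ Icc 0 T) (hb : b ∈ Icc 0 T) :
    mcoef σ2 β a / mcoef σ2 β b = exp (1 / (2 * σ2) * ∫ t in a..b, β t) := by
  have h0 : (0 : ℝ) ∈ Icc 0 T := ⟨le_rfl, ha.1.trans ha.2⟩
  rw [mcoef, mcoef, ← exp_sub, ← intervalIntegral.integral_interval_sub_left
    (hβ.intervalIntegrable_of_mem h0 hb) (hβ.intervalIntegrable_of_mem h0 ha)]
  ring_nf

lemma strictAntiOn_mcoef (hβ : IsNoiseSchedule T B β) (hσ2 : 0 < σ2) :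
    StrictAntiOn (mcoef σ2 β) (Icc 0 T) := fun a ha b hb hab => by
  rw [← one_lt_div (mcoef_pos σ2 β b), hβ.mcoef_div_mcoef ha hb, one_lt_exp_iff]
  have := hβ.integral_pos ha.1 hab hb.2
  positivity

lemma continuousOn_mcoef (hβ : IsNoiseSchedule T B β) : ContinuousOn (mcoef σ2 β) (Icc 0 T) := by
  rcases le_or_gt 0 T with hT | hT
  · have := intervalIntegral.continuousOn_primitive_interval' hβ.intervalIntegrable left_mem_uIcc
    rw [uIcc_of_le hT] at this
    exact (continuousOn_const.mul this).rexp
  · simp [hT]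

lemma mcoef_le_one (hβ : IsNoiseSchedule T B β) (hσ2 : 0 < σ2) (ht : t ∈ Icc 0 T) :
    mcoef σ2 β t ≤ 1 := by
  simpa [mcoef] using
    (hβ.strictAntiOn_mcoef hσ2).antitoneOn ⟨le_rfl, ht.1.trans ht.2⟩ ht ht.1

lemma mcoef_sq_lt_one (hβ : IsNoiseSchedule T B β) (hσ2 : 0 < σ2) (hT : 0 < T) :
    mcoef σ2 β T ^ 2 < 1 := by
  have : mcoef σ2 β T < 1 := by
    simpa [mcoef] using hβ.strictAntiOn_mcoef hσ2 ⟨le_rfl, hT.le⟩ ⟨hT.le, le_rfl⟩ hT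
  exact pow_lt_one₀ (mcoef_pos σ2 β T).le this two_ne_zero

lemma mcoef_div_mcoef_le (hβ : IsNoiseSchedule T B β) (hσ2 : 0 < σ2) (ha : 0 ≤ a) (hab : a ≤ b)
    (hb : b ≤ T) (h : (b - a) * B / σ2 ≤ 1 / 2) :
    mcoef σ2 β a / mcoef σ2 β b ≤ 1 + 2 / 3 * ((b - a) * B / σ2) := by
  have hB := hβ.bound_pos (ha.trans (hab.trans hb))
  rw [hβ.mcoef_div_mcoef ⟨ha, hab.trans hb⟩ ⟨ha.trans hab, hb⟩]
  calc exp (1 / (2 * σ2) * ∫ t in a..b, β t) ≤ exp (1 / (2 * σ2) * ((b - a) * B)) := by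
        gcongr
        exact hβ.integral_le ha hab hb
    _ = exp ((b - a) * B / σ2 / 2) := by congr 1; field_simp
    _ ≤ 1 + 2 / 3 * ((b - a) * B / σ2) := exp_half_le (by positivity) h

lemma continuousOn_lipConst (hβ : IsNoiseSchedule T B β) (hσ2 : 0 < σ2) (hL : 0 < Lstar) :
    ContinuousOn (lipConst σ2 β Lstar) (Icc 0 T) := by
  have hm : ContinuousOn (mcoef σ2 β) (Icc 0 T) := hβ.continuousOn_mcoef
  have hmax : ContinuousOn
      (fun t => max (σ2 * (1 - mcoef σ2 β t ^ 2)) (mcoef σ2 β t ^ 2 / Lstar)) (Icc 0 T) := by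
    fun_prop
  exact ((continuousOn_const.div hmax fun t _ => (max_mul_one_sub_pos hL).ne').sub
    continuousOn_const).congr fun t ht =>
      lipConst_eq_one_div_max hσ2 hL (hβ.mcoef_le_one hσ2 ht)

lemma continuousOn_concConst (hβ : IsNoiseSchedule T B β) (hσ2 : 0 < σ2)
    (hC : 0 < Cstar) : ContinuousOn (concConst σ2 β Cstar) (Icc 0 T) := by
  have hm := (hβ.continuousOn_mcoef (σ2 := σ2)).pow 2
  exact (continuousOn_const.div
    ((hm.div_const Cstar).add (continuousOn_const.mul (continuousOn_const.sub hm)))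
    fun t ht => (div_add_mul_one_sub_pos hσ2 hC (hβ.mcoef_le_one hσ2 ht)).ne').sub
      continuousOn_const

end IsNoiseSchedule

section CellWeight

variable {σ2 T B a b t : ℝ} {β : ℝ → ℝ}

/-- The weight `(m̃_t / m̃_b) β̄(t)` against which `L̄` and `C̄` are integrated over a cell
`[a, b]`, once the prefactor `m̃_a / m̃_b` has been moved inside the integrals. -/
def cellWeight (σ2 T : ℝ) (β : ℝ → ℝ) (b t : ℝ) : ℝ :=
  mtilde σ2 T β t / mtilde σ2 T β b * β (T - t)

lemma mtilde_eq_mcoef (σ2 T : ℝ) (β : ℝ → ℝ) :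
    mtilde σ2 T β = mcoef σ2 fun s => β (T - s) := rfl

lemma mtilde_pos (σ2 T : ℝ) (β : ℝ → ℝ) (t : ℝ) : 0 < mtilde σ2 T β t := exp_pos _

lemma mtilde_div_mul_integral (σ2 T : ℝ) (β f : ℝ → ℝ) (a b : ℝ) :
    mtilde σ2 T β a / mtilde σ2 T β b *
        ∫ t in a..b, f t * (mtilde σ2 T β t / mtilde σ2 T β a) * β (T - t) =
      ∫ t in a..b, f t * cellWeight σ2 T β b t := by
  rw [← intervalIntegral.integral_const_mul]
  refine intervalIntegral.integral_congr fun t _ => ?_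
  have ha := (mtilde_pos σ2 T β a).ne'
  simp only [cellWeight]
  field_simp

lemma stepE1_eq (σ2 T : ℝ) (β L C : ℝ → ℝ) (a b : ℝ) :
    stepE1 σ2 T β L C a b = 1 + (∫ t in a..b, L (T - t) * cellWeight σ2 T β b t) ^ 2 -
      2 * ∫ t in a..b, C (T - t) * cellWeight σ2 T β b t := by
  rw [stepE1, ← mtilde_div_mul_integral σ2 T β (fun t => L (T - t)),
    ← mtilde_div_mul_integral σ2 T β (fun t => C (T - t))]
  ring

lemma stepE2_eq (σ2 T : ℝ) (β L C : ℝ → ℝ) (M h a b : ℝ) :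
    stepE2 σ2 T β L C M h a b =
      1 + 1 / 2 * (∫ t in a..b, L (T - t) * cellWeight σ2 T β b t) ^ 2 -
        (∫ t in a..b, C (T - t) * cellWeight σ2 T β b t) +
        mtilde σ2 T β a / mtilde σ2 T β b * (M * h) * ∫ t in a..b, cellWeight σ2 T β b t := by
  have unit_integrand := mtilde_div_mul_integral σ2 T β (fun _ => 1) a b
  simp only [one_mul] at unit_integrand
  rw [stepE2, ← unit_integrand, ← mtilde_div_mul_integral σ2 T β (fun t => L (T - t)),
    ← mtilde_div_mul_integral σ2 T β (fun t => C (T - t))]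
  ring

namespace IsNoiseSchedule

lemma cellWeight_pos (hβ : IsNoiseSchedule T B β) (ht : t ∈ Icc 0 T) :
    0 < cellWeight σ2 T β b t :=
  mul_pos (div_pos (mtilde_pos σ2 T β t) (mtilde_pos σ2 T β b)) (hβ.reverse.pos t ht)

lemma intervalIntegrable_cellWeight (hβ : IsNoiseSchedule T B β) (ha : 0 ≤ a) (hab : a ≤ b)
    (hb : b ≤ T) : IntervalIntegrable (cellWeight σ2 T β b) volume a b := by
  refine (hβ.reverse.intervalIntegrable_of_mem ⟨ha, hab.trans hb⟩
    ⟨ha.trans hab, hb⟩).continuousOn_mul ?_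
  rw [uIcc_of_le hab, mtilde_eq_mcoef]
  exact (hβ.reverse.continuousOn_mcoef.mono (Icc_subset_Icc ha hb)).div_const _

lemma integral_cellWeight_le (hβ : IsNoiseSchedule T B β) (hσ2 : 0 < σ2) (ha : 0 ≤ a)
    (hab : a ≤ b) (hb : b ≤ T) (h : (b - a) * B / σ2 ≤ 1 / 2) :
    ∫ t in a..b, cellWeight σ2 T β b t ≤ 4 / 3 * ((b - a) * B) := by
  have pointwise_le (t : ℝ) (ht : t ∈ Icc a b) : cellWeight σ2 T β b t ≤ 4 / 3 * B := by
    have ht' : t ∈ Icc 0 T := Icc_subset_Icc ha hb ht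
    have ratio_le : mtilde σ2 T β t / mtilde σ2 T β b ≤ 4 / 3 := by
      calc mtilde σ2 T β t / mtilde σ2 T β b ≤ mtilde σ2 T β a / mtilde σ2 T β b :=
            div_le_div_of_nonneg_right ((hβ.reverse.strictAntiOn_mcoef hσ2).antitoneOn
              ⟨ha, hab.trans hb⟩ ht' ht.1) (mtilde_pos σ2 T β b).le
        _ ≤ 1 + 2 / 3 * ((b - a) * B / σ2) := hβ.reverse.mcoef_div_mcoef_le hσ2 ha hab hb h
        _ ≤ 4 / 3 := by linarith
    exact mul_le_mul ratio_le (hβ.reverse.le_bound t ht') (hβ.reverse.pos t ht').le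
      (by norm_num)
  have := intervalIntegral.integral_mono_on hab (hβ.intervalIntegrable_cellWeight ha hab hb)
    (intervalIntegrable_const (c := 4 / 3 * B)) pointwise_le
  rw [intervalIntegral.integral_const, smul_eq_mul] at this
  linarith

end IsNoiseSchedule

end CellWeight

section Cell

variable {σ2 T B Cstar Lstar a b : ℝ} {β : ℝ → ℝ}

namespace IsNoiseSchedule

lemma integral_concConst_mul_cellWeight_lt_half (hβ : IsNoiseSchedule T B β) (hσ2 : 0 < σ2)
    (ha : 0 ≤ a) (hab : a ≤ b) (hb : b ≤ T) (hC : 1 < σ2 * Cstar) (hCL : Cstar ≤ Lstar)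
    (hstep : (b - a) * B * Lstar * (σ2 * Lstar + 1) ≤ 1 - 1 / (σ2 * Cstar)) :
    ∫ t in a..b, concConst σ2 β Cstar (T - t) * cellWeight σ2 T β b t < 1 / 2 := by
  have hh : 0 ≤ (b - a) * B :=
    mul_nonneg (sub_nonneg.2 hab) (hβ.bound_pos (ha.trans (hab.trans hb))).le
  have hψ := hβ.intervalIntegrable_cellWeight (σ2 := σ2) ha hab hb
  have hC0 : 0 < Cstar := pos_of_mul_pos_right (one_pos.trans hC) hσ2.le
  have hmaps : MapsTo (fun t => T - t) (Icc a b) (Icc 0 T) := fun t ht =>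
    sub_mem_Icc_zero_iff_right.2 (Icc_subset_Icc ha hb ht)
  have hcont : ContinuousOn (fun t => concConst σ2 β Cstar (T - t)) (uIcc a b) := by
    rw [uIcc_of_le hab]
    exact (hβ.continuousOn_concConst hσ2 hC0).comp (by fun_prop) hmaps
  calc ∫ t in a..b, concConst σ2 β Cstar (T - t) * cellWeight σ2 T β b t
      ≤ ∫ t in a..b, (Cstar - 1 / σ2) * cellWeight σ2 T β b t := by
        refine intervalIntegral.integral_mono_on hab (hψ.continuousOn_mul hcont)
          (hψ.const_mul _) fun t ht => ?_
        exact mul_le_mul_of_nonneg_right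
          (concConst_le hσ2 hC (hβ.mcoef_le_one hσ2 (hmaps ht)))
          (hβ.cellWeight_pos (Icc_subset_Icc ha hb ht)).le
    _ = (Cstar - 1 / σ2) * ∫ t in a..b, cellWeight σ2 T β b t :=
        intervalIntegral.integral_const_mul _ _
    _ ≤ (Cstar - 1 / σ2) * (4 / 3 * ((b - a) * B)) := by
        refine mul_le_mul_of_nonneg_left (hβ.integral_cellWeight_le hσ2 ha hab hb
          (div_le_half_of_mul_le hσ2 hh hC hCL hstep)) (sub_nonneg.2 ?_)
        rw [div_le_iff₀ hσ2]
        linarith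
    _ = 4 / 3 * ((b - a) * B / σ2) * (σ2 * Cstar - 1) := by field_simp
    _ < 1 / 2 := by
        refine four_thirds_mul_lt_half (l := σ2 * Lstar) (by positivity) hC (by gcongr) ?_
        convert hstep using 2
        field_simp

lemma half_sq_integral_lipConst_add_lt {D : ℝ} (hβ : IsNoiseSchedule T B β) (hσ2 : 0 < σ2)
    (ha : 0 ≤ a) (hab : a < b) (hb : b ≤ T) (hC : 1 < σ2 * Cstar) (hCL : Cstar ≤ Lstar)
    (hD : 0 ≤ D) (hstep : (b - a) * B * Lstar * (σ2 * Lstar + 1) ≤ 1 - 1 / (σ2 * Cstar))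
    (hpointwise : ∀ s ∈ Icc 0 T,
      σ2 * D + (b - a) * B * Lstar * mcoef σ2 β s ^ 2 * (1 + σ2 * lipConst σ2 β Lstar s) ≤
        (1 - 1 / (σ2 * Cstar)) * mcoef σ2 β s ^ 2) :
    1 / 2 * (∫ t in a..b, lipConst σ2 β Lstar (T - t) * cellWeight σ2 T β b t) ^ 2 +
        mtilde σ2 T β a / mtilde σ2 T β b * D * ∫ t in a..b, cellWeight σ2 T β b t <
      ∫ t in a..b, concConst σ2 β Cstar (T - t) * cellWeight σ2 T β b t := by
  have hh : 0 ≤ (b - a) * B :=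
    mul_nonneg (sub_nonneg.2 hab.le) (hβ.bound_pos (ha.trans (hab.le.trans hb))).le
  have hC0 : 0 < Cstar := pos_of_mul_pos_right (one_pos.trans hC) hσ2.le
  have hL : 0 < Lstar := hC0.trans_le hCL
  have hhalf := div_le_half_of_mul_le hσ2 hh hC hCL hstep
  have hmaps : MapsTo (fun t => T - t) (Icc a b) (Icc 0 T) := fun t ht =>
    sub_mem_Icc_zero_iff_right.2 (Icc_subset_Icc ha hb ht)
  refine half_sq_integral_add_lt hab (hβ.intervalIntegrable_cellWeight ha hab.le hb)
    (fun t ht => hβ.cellWeight_pos (Icc_subset_Icc ha hb ht))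
    ((hβ.continuousOn_lipConst hσ2 hL).comp (by fun_prop) hmaps)
    ((hβ.continuousOn_concConst hσ2 hC0).comp (by fun_prop) hmaps) fun t ht => ?_
  calc 1 / 2 * (∫ t in a..b, cellWeight σ2 T β b t) * lipConst σ2 β Lstar (T - t) ^ 2 +
        mtilde σ2 T β a / mtilde σ2 T β b * D
      ≤ 1 / 2 * (4 / 3 * ((b - a) * B)) * lipConst σ2 β Lstar (T - t) ^ 2 +
        mtilde σ2 T β a / mtilde σ2 T β b * D := by
        gcongr
        exact hβ.integral_cellWeight_le hσ2 ha hab.le hb hhalf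
    _ = 2 / 3 * ((b - a) * B) * lipConst σ2 β Lstar (T - t) ^ 2 +
        mtilde σ2 T β a / mtilde σ2 T β b * D := by ring
    _ < concConst σ2 β Cstar (T - t) :=
        mul_sq_lipConst_add_lt_concConst hσ2 hC hCL (hβ.mcoef_le_one hσ2 (hmaps ht)) hh hD
          (hβ.reverse.mcoef_div_mcoef_le hσ2 ha hab.le hb hhalf) (hpointwise _ (hmaps ht))

end IsNoiseSchedule

end Cell

section StepSizes

variable {σ2 T B Cstar Lstar M h μ a b : ℝ} {β : ℝ → ℝ}

lemma mul_add_one_le_of_step_le (hσ2 : 0 < σ2) (hB : 0 < B) (hC : 0 < Cstar) (hL : 0 < Lstar)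
    (hh : h ≤ (σ2 * Cstar - 1) / (σ2 * Cstar * (σ2 * Lstar + 1) * Lstar * B)) :
    h * B * Lstar * (σ2 * Lstar + 1) ≤ 1 - 1 / (σ2 * Cstar) := by
  calc h * B * Lstar * (σ2 * Lstar + 1)
      ≤ (σ2 * Cstar - 1) / (σ2 * Cstar * (σ2 * Lstar + 1) * Lstar * B) * B * Lstar *
        (σ2 * Lstar + 1) := by gcongr
    _ = 1 - 1 / (σ2 * Cstar) := by field_simp

lemma div_add_div_one_sub_le_of_step_le (hσ2 : 0 < σ2) (hB : 0 < B) (hC : 0 < Cstar)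
    (hL : 0 < Lstar) (hM : 0 ≤ M) (hμ0 : 0 < μ) (hμ1 : μ < 1)
    (hh : h ≤ (σ2 * Cstar - 1) / (σ2 * Cstar) *
      (μ * (1 - μ) / (σ2 * M * (1 - μ) + B * Lstar * μ))) :
    σ2 * (M * h) / μ + h * B * Lstar / (1 - μ) ≤ 1 - 1 / (σ2 * Cstar) := by
  have hμ1' : 0 < 1 - μ := sub_pos.2 hμ1
  calc σ2 * (M * h) / μ + h * B * Lstar / (1 - μ)
      = h * ((σ2 * M * (1 - μ) + B * Lstar * μ) / (μ * (1 - μ))) := by field_simp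
    _ ≤ (σ2 * Cstar - 1) / (σ2 * Cstar) * (μ * (1 - μ) / (σ2 * M * (1 - μ) + B * Lstar * μ)) *
        ((σ2 * M * (1 - μ) + B * Lstar * μ) / (μ * (1 - μ))) := by gcongr
    _ = 1 - 1 / (σ2 * Cstar) := by field_simp

lemma div_add_mul_add_one_le_of_step_le (hσ2 : 0 < σ2) (hB : 0 < B) (hC : 0 < Cstar)
    (hL : 0 < Lstar) (hM : 0 ≤ M)
    (hh : h ≤ (σ2 * Cstar - 1) * Lstar /
      (σ2 * Cstar * (σ2 * Lstar + 1) * (M + B * Lstar ^ 2))) :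
    σ2 * (M * h) * (σ2 * Lstar + 1) / (σ2 * Lstar) + h * B * Lstar * (σ2 * Lstar + 1) ≤
      1 - 1 / (σ2 * Cstar) := by
  calc σ2 * (M * h) * (σ2 * Lstar + 1) / (σ2 * Lstar) + h * B * Lstar * (σ2 * Lstar + 1)
      = h * ((σ2 * Lstar + 1) * (M + B * Lstar ^ 2) / Lstar) := by field_simp
    _ ≤ (σ2 * Cstar - 1) * Lstar / (σ2 * Cstar * (σ2 * Lstar + 1) * (M + B * Lstar ^ 2)) *
        ((σ2 * Lstar + 1) * (M + B * Lstar ^ 2) / Lstar) := by gcongr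
    _ = 1 - 1 / (σ2 * Cstar) := by field_simp

namespace IsNoiseSchedule

lemma stepE1_mem_Ioo (hβ : IsNoiseSchedule T B β) (hσ2 : 0 < σ2) (ha : 0 ≤ a) (hab : a < b)
    (hb : b ≤ T) (hC : 1 < σ2 * Cstar) (hCL : Cstar ≤ Lstar)
    (hstep : b - a ≤ (σ2 * Cstar - 1) / (σ2 * Cstar * (σ2 * Lstar + 1) * Lstar * B)) :
    stepE1 σ2 T β (lipConst σ2 β Lstar) (concConst σ2 β Cstar) a b ∈ Ioo 0 1 := by
  have hB := hβ.bound_pos (ha.trans (hab.le.trans hb))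
  have hC0 : 0 < Cstar := pos_of_mul_pos_right (one_pos.trans hC) hσ2.le
  have hL : 0 < Lstar := hC0.trans_le hCL
  have hstep' := mul_add_one_le_of_step_le hσ2 hB hC0 hL hstep
  have contraction := hβ.half_sq_integral_lipConst_add_lt hσ2 ha hab hb hC hCL le_rfl hstep'
    fun s hs => by
      rw [mul_zero, zero_add]
      calc (b - a) * B * Lstar * mcoef σ2 β s ^ 2 * (1 + σ2 * lipConst σ2 β Lstar s)
          ≤ (b - a) * B * Lstar * mcoef σ2 β s ^ 2 * (1 + σ2 * Lstar) := by
            gcongr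
            exact lipConst_le hσ2 hL (hβ.mcoef_le_one hσ2 hs)
        _ = (b - a) * B * Lstar * (σ2 * Lstar + 1) * mcoef σ2 β s ^ 2 := by ring
        _ ≤ (1 - 1 / (σ2 * Cstar)) * mcoef σ2 β s ^ 2 := by gcongr
  have hQ := hβ.integral_concConst_mul_cellWeight_lt_half hσ2 ha hab.le hb hC hCL hstep'
  rw [mul_zero, zero_mul, add_zero] at contraction
  rw [stepE1_eq]
  constructor
  · linarith [sq_nonneg (∫ t in a..b, lipConst σ2 β Lstar (T - t) * cellWeight σ2 T β b t)]
  · linarith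

lemma add_mul_one_add_lipConst_le {K D q s : ℝ} (hβ : IsNoiseSchedule T B β) (hσ2 : 0 < σ2)
    (hT : 0 < T) (hL : 0 < Lstar) (hK : 0 ≤ K) (hD : 0 ≤ D)
    (at_terminal : K / mcoef σ2 β T ^ 2 + D / (1 - mcoef σ2 β T ^ 2) ≤ q)
    (at_crossover : K * (σ2 * Lstar + 1) / (σ2 * Lstar) + D * (σ2 * Lstar + 1) ≤ q)
    (hs : s ∈ Icc 0 T) :
    K + D * mcoef σ2 β s ^ 2 * (1 + σ2 * lipConst σ2 β Lstar s) ≤ q * mcoef σ2 β s ^ 2 := by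
  have hm := hβ.mcoef_le_one hσ2 hs
  have hx := mcoef_sq_pos σ2 β s
  have antitone : mcoef σ2 β T ^ 2 ≤ mcoef σ2 β s ^ 2 :=
    pow_le_pow_left₀ (mcoef_pos σ2 β T).le
      ((hβ.strictAntiOn_mcoef hσ2).antitoneOn hs ⟨hT.le, le_rfl⟩ hs.2) 2
  have interpolated := div_add_mul_one_add_le hK hD (mul_pos hσ2 hL) (mcoef_sq_pos σ2 β T)
    (hβ.mcoef_sq_lt_one hσ2 hT) antitone
    (mul_le_mul_of_nonneg_left (lipConst_le hσ2 hL hm) hσ2.le)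
    (mul_lipConst_mul_one_sub_le hσ2 hL hm) at_terminal at_crossover
  calc K + D * mcoef σ2 β s ^ 2 * (1 + σ2 * lipConst σ2 β Lstar s)
      = (K / mcoef σ2 β s ^ 2 + D * (1 + σ2 * lipConst σ2 β Lstar s)) * mcoef σ2 β s ^ 2 := by
        rw [add_mul, div_mul_cancel₀ _ hx.ne']
        ring
    _ ≤ q * mcoef σ2 β s ^ 2 := by gcongr

lemma stepE2_mem_Ioo (hβ : IsNoiseSchedule T B β) (hσ2 : 0 < σ2) (ha : 0 ≤ a) (hab : a < b)
    (hb : b ≤ T) (hC : 1 < σ2 * Cstar) (hCL : Cstar ≤ Lstar) (hM : 0 ≤ M)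
    (hstep : b - a ≤ min
      ((σ2 * Cstar - 1) / (σ2 * Cstar) * (mcoef σ2 β T ^ 2 * (1 - mcoef σ2 β T ^ 2) /
        (σ2 * M * (1 - mcoef σ2 β T ^ 2) + B * Lstar * mcoef σ2 β T ^ 2)))
      ((σ2 * Cstar - 1) * Lstar / (σ2 * Cstar * (σ2 * Lstar + 1) * (M + B * Lstar ^ 2)))) :
    stepE2 σ2 T β (lipConst σ2 β Lstar) (concConst σ2 β Cstar) M (b - a) a b ∈ Ioo 0 1 := by
  have hT : 0 < T := (ha.trans_lt hab).trans_le hb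
  have hB := hβ.bound_pos hT.le
  have hh : 0 < b - a := sub_pos.2 hab
  have hC0 : 0 < Cstar := pos_of_mul_pos_right (one_pos.trans hC) hσ2.le
  have hL : 0 < Lstar := hC0.trans_le hCL
  have at_terminal := div_add_div_one_sub_le_of_step_le hσ2 hB hC0 hL hM (mcoef_sq_pos σ2 β T)
    (hβ.mcoef_sq_lt_one hσ2 hT) (hstep.trans (min_le_left _ _))
  have at_crossover := div_add_mul_add_one_le_of_step_le hσ2 hB hC0 hL hM
    (hstep.trans (min_le_right _ _))
  have hstep' : (b - a) * B * Lstar * (σ2 * Lstar + 1) ≤ 1 - 1 / (σ2 * Cstar) :=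
    (le_add_of_nonneg_left (by positivity)).trans at_crossover
  have contraction := hβ.half_sq_integral_lipConst_add_lt (D := M * (b - a)) hσ2 ha hab hb hC hCL
    (by positivity) hstep' fun s hs => hβ.add_mul_one_add_lipConst_le hσ2 hT hL (by positivity)
      (by positivity) at_terminal at_crossover hs
  have hQ := hβ.integral_concConst_mul_cellWeight_lt_half hσ2 ha hab.le hb hC hCL hstep'
  have hr : 0 ≤ mtilde σ2 T β a / mtilde σ2 T β b :=
    (div_pos (mtilde_pos σ2 T β a) (mtilde_pos σ2 T β b)).le
  have hψ : 0 ≤ ∫ t in a..b, cellWeight σ2 T β b t :=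
    intervalIntegral.integral_nonneg hab.le fun t ht =>
      (hβ.cellWeight_pos (Icc_subset_Icc ha hb ht)).le
  rw [stepE2_eq]
  constructor
  · linarith [sq_nonneg (∫ t in a..b, lipConst σ2 β Lstar (T - t) * cellWeight σ2 T β b t),
      mul_nonneg (mul_nonneg hr (mul_nonneg hM hh.le)) hψ]
  · linarith

end IsNoiseSchedule

end StepSizes

lemma add_one_mul_div_le_of_lt {T : ℝ} {N k : ℕ} (hT : 0 ≤ T) (hk : k < N) :
    ((k : ℝ) + 1) * (T / N) ≤ T := by
  have hN : (0 : ℝ) < N := by exact_mod_cast (Nat.zero_le k).trans_lt hk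
  calc ((k : ℝ) + 1) * (T / N) ≤ N * (T / N) := by
        gcongr
        exact_mod_cast hk
    _ = T := mul_div_cancel₀ T hN.ne'

theorem step_size_choice_explicit_general {σ2 T B a b : ℝ} {β : ℝ → ℝ}
    (hβ : IsNoiseSchedule T B β) (hσ2 : 0 < σ2) {Cstar Lstar : ℝ} (hC : 1 / σ2 < Cstar)
    (hCL : Cstar ≤ Lstar) (ha : 0 ≤ a) (hab : a < b) (hb : b ≤ T) :
    (b - a ≤ (σ2 * Cstar - 1) / (σ2 * Cstar * (σ2 * Lstar + 1) * Lstar * B) →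
      stepE1 σ2 T β (lipConst σ2 β Lstar) (concConst σ2 β Cstar) a b ∈ Ioo 0 1) ∧
    ∀ M, 0 ≤ M →
      b - a ≤ min
        ((σ2 * Cstar - 1) / (σ2 * Cstar) * (mcoef σ2 β T ^ 2 * (1 - mcoef σ2 β T ^ 2) /
          (σ2 * M * (1 - mcoef σ2 β T ^ 2) + B * Lstar * mcoef σ2 β T ^ 2)))
        ((σ2 * Cstar - 1) * Lstar /
          (σ2 * Cstar * (σ2 * Lstar + 1) * (M + B * Lstar ^ 2))) →
      stepE2 σ2 T β (lipConst σ2 β Lstar) (concConst σ2 β Cstar) M (b - a) a b ∈ Ioo 0 1 := by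
  have hC' : 1 < σ2 * Cstar := (div_lt_iff₀' hσ2).1 hC
  exact ⟨hβ.stepE1_mem_Ioo hσ2 ha hab hb hC' hCL,
    fun _ hM => hβ.stepE2_mem_Ioo hσ2 ha hab hb hC' hCL hM⟩

/-- explicit step-size conditions guaranteeing per-step contraction factors
in `(0,1)` when the data distribution is `L*`-smooth and `C*`-strongly log-concave with
`1/σ² < C* ≤ L*`, with `C_t` and `L_t` given by the explicit propagation formulas. -/
theorem step_size_choice_explicit (σ T : ℝ) (hσ : 0 < σ) (hT : 0 < T)
    (β : ℝ → ℝ) (hβc : ContinuousOn β (Icc 0 T)) (hβpos : ∀ t ∈ Icc (0:ℝ) T, 0 < β t)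
    (hβmono : MonotoneOn β (Icc 0 T))
    (Cstar Lstar : ℝ) (hC : 1 / σ ^ 2 < Cstar) (hCL : Cstar ≤ Lstar)
    (N : ℕ) (hN : 1 ≤ N) :
    (T / N ≤
        min (2 * σ ^ 2 * Real.log 2 / β T)
          (min ((σ ^ 2 * Cstar - 1) / (σ ^ 2 * Cstar * (σ ^ 2 * Lstar + 1) * Lstar * β T))
            ((σ ^ 2 * Cstar - 1) / ((σ ^ 2 * Lstar - 1) * Lstar * β T))) →
      ∀ k < N,
        0 < stepE1 (σ ^ 2) T β (lipConst (σ ^ 2) β Lstar) (concConst (σ ^ 2) β Cstar)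
              ((k : ℝ) * (T / N)) (((k : ℝ) + 1) * (T / N)) ∧
          stepE1 (σ ^ 2) T β (lipConst (σ ^ 2) β Lstar) (concConst (σ ^ 2) β Cstar)
              ((k : ℝ) * (T / N)) (((k : ℝ) + 1) * (T / N)) < 1) ∧
      ∀ M : ℝ, 0 ≤ M →
        T / N ≤
          min (2 * σ ^ 2 * Real.log 2 / β T)
            (min ((σ ^ 2 * Cstar - 1) / (σ ^ 2 * M + β T * Lstar * (σ ^ 2 * Lstar - 1)))
              (min ((σ ^ 2 * Cstar - 1) / (σ ^ 2 * Cstar) *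
                  (mcoef (σ ^ 2) β T ^ 2 * (1 - mcoef (σ ^ 2) β T ^ 2) /
                    (σ ^ 2 * M * (1 - mcoef (σ ^ 2) β T ^ 2) +
                      β T * Lstar * mcoef (σ ^ 2) β T ^ 2)))
                ((σ ^ 2 * Cstar - 1) * Lstar /
                  (σ ^ 2 * Cstar * (σ ^ 2 * Lstar + 1) * (M + β T * Lstar ^ 2))))) →
        ∀ k < N,
          0 < stepE2 (σ ^ 2) T β (lipConst (σ ^ 2) β Lstar) (concConst (σ ^ 2) β Cstar)
                M (T / N) ((k : ℝ) * (T / N)) (((k : ℝ) + 1) * (T / N)) ∧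
            stepE2 (σ ^ 2) T β (lipConst (σ ^ 2) β Lstar) (concConst (σ ^ 2) β Cstar)
                M (T / N) ((k : ℝ) * (T / N)) (((k : ℝ) + 1) * (T / N)) < 1 := by
  have hβ : IsNoiseSchedule T (β T) β := .of_monotoneOn hT.le hβpos hβmono
  have hh : 0 < T / N := div_pos hT (by exact_mod_cast hN)
  have cell (k : ℕ) (hk : k < N) := step_size_choice_explicit_general hβ (pow_pos hσ 2) hC hCL
    (a := k * (T / N)) (by positivity) (mul_lt_mul_of_pos_right (lt_add_one (k : ℝ)) hh)
    (add_one_mul_div_le_of_lt hT.le hk)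
  simp only [← sub_mul, add_sub_cancel_left, one_mul] at cell
  exact ⟨fun h k hk => (cell k hk).1 ((h.trans (min_le_right _ _)).trans (min_le_left _ _)),
    fun M hM h k hk => (cell k hk).2 M hM
      (h.trans ((min_le_right _ _).trans (min_le_right _ _)))⟩
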